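/- There exist a continuous probability density ϱ with compact support on ℝ² and a Borel vector field b: ℝ² → ℝ² with compact support such that |b|ϱ ∈ L¹(ℝ²), the equation Δϱ − div(ϱb) = 0 holds in the weak sense, but ϱ does not belong to the Sobolev class W^{1,1}_loc(ℝ²). -/

import Mathlib

open MeasureTheory Real

noncomputable section

/-- First partial derivative (with respect to the first coordinate) on `ℝ²`. -/
def pd1 (f : ℝ × ℝ → ℝ) (p : ℝ × ℝ) : ℝ := fderiv ℝ f p (1, 0)

/-- Second partial derivative (with respect to the second coordinate) on `ℝ²`. -/
def pd2 (f : ℝ × ℝ → ℝ) (p : ℝ × ℝ) : ℝ := fderiv ℝ f p (0, 1)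

/-- Test functions: smooth compactly supported functions on `ℝ²`. -/
def IsTest (φ : ℝ × ℝ → ℝ) : Prop := ContDiff ℝ (⊤ : ℕ∞) φ ∧ HasCompactSupport φ

/-- Euclidean magnitude of a vector in `ℝ²`. -/
def emag (v : ℝ × ℝ) : ℝ := Real.sqrt (v.1 ^ 2 + v.2 ^ 2)

/-- Membership in the Sobolev class `W^{1,1}(ℝ²)`: the function is integrable and possesses
integrable weak first-order partial derivatives. -/
def MemW11 (f : ℝ × ℝ → ℝ) : Prop :=
  Integrable f ∧
    ∃ g₁ g₂ : ℝ × ℝ → ℝ, Integrable g₁ ∧ Integrable g₂ ∧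
      (∀ φ : ℝ × ℝ → ℝ, IsTest φ → ∫ p, g₁ p * φ p = - ∫ p, f p * pd1 φ p) ∧
      (∀ φ : ℝ × ℝ → ℝ, IsTest φ → ∫ p, g₂ p * φ p = - ∫ p, f p * pd2 φ p)

/-- Membership in `W^{1,1}_loc(ℝ²)`: `ζ f ∈ W^{1,1}(ℝ²)` for every test function `ζ`. -/
def MemW11loc (f : ℝ × ℝ → ℝ) : Prop :=
  ∀ ζ : ℝ × ℝ → ℝ, IsTest ζ → MemW11 (fun p => ζ p * f p)

/-!
The density is built from a continuous compactly supported `u` with `Δu = ∂₁g` weakly for some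
`g ∈ L¹` but with `∂₂u` not a measure. Such a `u` exists by uniform boundedness: otherwise, on the
Banach space of pairs `(u, g)`, the variation of `∂₂u` would be at most `C (‖u‖_∞ + ‖g‖₁)`, and
`u = ∂₁ψ`, `g = Δψ` would give `‖∂₁∂₂ψ‖₁ ≤ C (‖∂₁ψ‖_∞ + ‖Δψ‖₁)`. Placing copies of
`ψ(2 ·) / 4` side by side preserves the `L¹` norms and halves the `L^∞` norm, so the `L^∞` term
could be dropped, and `‖∂₁∂₂ψ‖₁ ≤ C ‖Δψ‖₁` contradicts Ornstein's non-inequality. The latter is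
seen directly on truncations of `log (x² + y²)`: the Laplacian stays bounded in `L¹`, while the
mixed derivative is of order `1 / |p|²`, which contributes a fixed amount on each dyadic shell.

Finally, with a smooth hump `η`, the function `ϱ = η + u` is nonnegative and satisfies `Δϱ = div J`
for the flux `J = ∇η + (g, 0) ∈ L¹`, and `b = J / ϱ`.
-/

section DirectionalDerivative

open Topology

variable {E : Type*} [NormedAddCommGroup E] [NormedSpace ℝ E] {f g : E → ℝ} {x : E}

/-- The derivative of `f` in the direction `v`. The partial derivatives `pd1` and `pd2` are, by
`rfl`, the cases `v = (1, 0)` and `v = (0, 1)`. -/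
def dirDeriv (v : E) (f : E → ℝ) (x : E) : ℝ := fderiv ℝ f x v

lemma contDiff_dirDeriv (hf : ContDiff ℝ (⊤ : ℕ∞) f) (v : E) :
    ContDiff ℝ (⊤ : ℕ∞) (dirDeriv v f) :=
  (hf.fderiv_right (m := (⊤ : ℕ∞)) (by simp)).clm_apply contDiff_const

lemma dirDeriv_comm (hf : ContDiff ℝ 2 f) (v w : E) :
    dirDeriv v (dirDeriv w f) x = dirDeriv w (dirDeriv v f) x := by
  have hf' : DifferentiableAt ℝ (fderiv ℝ f) x :=
    (hf.fderiv_right (m := 1) le_rfl).differentiable one_ne_zero x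
  have second_deriv (v w : E) : dirDeriv v (dirDeriv w f) x = fderiv ℝ (fderiv ℝ f) x v w := by
    change fderiv ℝ (fun y => fderiv ℝ f y w) x v = _
    simp [fderiv_clm_apply hf' (differentiableAt_const w)]
  rw [second_deriv, second_deriv]
  exact hf.contDiffAt.isSymmSndFDerivAt (by simp) v w

lemma dirDeriv_congr (h : f =ᶠ[𝓝 x] g) (v : E) :
    dirDeriv v f x = dirDeriv v g x := by
  rw [dirDeriv, dirDeriv, h.fderiv_eq]

lemma eventually_dirDeriv_eq (h : f =ᶠ[𝓝 x] g) (v : E) :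
    dirDeriv v f =ᶠ[𝓝 x] dirDeriv v g :=
  h.eventuallyEq_nhds.mono fun _ hy => dirDeriv_congr hy v

lemma dirDeriv_const (c : ℝ) (v : E) : dirDeriv v (fun _ => c) = fun _ => 0 :=
  funext fun x => by rw [dirDeriv, fderiv_const_apply, zero_apply]

lemma dirDeriv_add (hf : DifferentiableAt ℝ f x) (hg : DifferentiableAt ℝ g x) (v : E) :
    dirDeriv v (fun y => f y + g y) x = dirDeriv v f x + dirDeriv v g x := by
  simp only [dirDeriv, fderiv_fun_add hf hg, add_apply]

lemma dirDeriv_sub (hf : DifferentiableAt ℝ f x) (hg : DifferentiableAt ℝ g x) (v : E) :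
    dirDeriv v (fun y => f y - g y) x = dirDeriv v f x - dirDeriv v g x := by
  simp only [dirDeriv, fderiv_fun_sub hf hg, sub_apply]

lemma dirDeriv_const_mul (c : ℝ) (v : E) :
    dirDeriv v (fun y => c * f y) = fun x => c * dirDeriv v f x := by
  funext x
  change fderiv ℝ (c • f) x v = _
  rw [fderiv_const_smul_field]
  rfl

lemma dirDeriv_sum {ι : Type*} {s : Finset ι} {F : ι → E → ℝ}
    (hF : ∀ i ∈ s, DifferentiableAt ℝ (F i) x) (v : E) :
    dirDeriv v (fun y => ∑ i ∈ s, F i y) x = ∑ i ∈ s, dirDeriv v (F i) x := by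
  simp only [dirDeriv, fderiv_fun_sum hF, sum_apply]

lemma dirDeriv_comp_smul_sub (a : ℝ) (c v : E) :
    dirDeriv v (fun y => f (a • y - c)) = fun x => a * dirDeriv v f (a • x - c) := by
  funext x
  rw [dirDeriv, fderiv_comp_smul (f := fun y => f (y - c)) a, fderiv_comp_sub]
  rfl

lemma dirDeriv_dirDeriv_comp_smul_sub (a : ℝ) (c v w : E) :
    dirDeriv w (dirDeriv v fun y => f (a • y - c)) x =
      a ^ 2 * dirDeriv w (dirDeriv v f) (a • x - c) := by
  rw [dirDeriv_comp_smul_sub, dirDeriv_const_mul, dirDeriv_comp_smul_sub]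
  ring

lemma support_dirDeriv_subset (v : E) : Function.support (dirDeriv v f) ⊆ tsupport f :=
  fun _ hx => support_fderiv_subset ℝ fun h => hx (by rw [dirDeriv, h, zero_apply])

lemma hasCompactSupport_dirDeriv (hf : HasCompactSupport f) (v : E) :
    HasCompactSupport (dirDeriv v f) :=
  hf.fderiv_apply (𝕜 := ℝ) v

variable [FiniteDimensional ℝ E] [MeasurableSpace E] [BorelSpace E] {μ : Measure E}
  [μ.IsAddHaarMeasure]

lemma integral_mul_dirDeriv (hf : ContDiff ℝ 1 f) (hg : ContDiff ℝ 1 g)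
    (hg' : HasCompactSupport g) (v : E) :
    ∫ x, f x * dirDeriv v g x ∂μ = -∫ x, dirDeriv v f x * g x ∂μ := by
  have hdf : Continuous (dirDeriv v f) :=
    (hf.continuous_fderiv one_ne_zero).clm_apply continuous_const
  have hdg : Continuous (dirDeriv v g) :=
    (hg.continuous_fderiv one_ne_zero).clm_apply continuous_const
  exact integral_mul_fderiv_eq_neg_fderiv_mul_of_integrable
    ((hdf.mul hg.continuous).integrable_of_hasCompactSupport hg'.mul_left)
    ((hf.continuous.mul hdg).integrable_of_hasCompactSupport
      (hasCompactSupport_dirDeriv hg' v).mul_left)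
    ((hf.continuous.mul hg.continuous).integrable_of_hasCompactSupport hg'.mul_left)
    (fun x _ => hf.differentiable one_ne_zero x) (fun x _ => hg.differentiable one_ne_zero x)

lemma integral_comp_smul_sub (f : E → ℝ) (a : ℝ) (c : E) :
    ∫ x, f (a • x - c) ∂μ = |(a ^ Module.finrank ℝ E)⁻¹| * ∫ x, f x ∂μ := by
  rw [Measure.integral_comp_smul μ (fun x => f (x - c)) a, integral_sub_right_eq_self, smul_eq_mul]

end DirectionalDerivative

local notation "∂₁" => dirDeriv ((1, 0) : ℝ × ℝ)
local notation "∂₂" => dirDeriv ((0, 1) : ℝ × ℝ)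

/-- The Laplacian on `ℝ²`. -/
def lap (f : ℝ × ℝ → ℝ) (p : ℝ × ℝ) : ℝ := ∂₁ (∂₁ f) p + ∂₂ (∂₂ f) p

section TestFunctions

variable {f g : ℝ × ℝ → ℝ}

lemma fderiv_apply_eq_add (f : ℝ × ℝ → ℝ) (p v : ℝ × ℝ) :
    fderiv ℝ f p v = v.1 * ∂₁ f p + v.2 * ∂₂ f p := by
  conv_lhs => rw [show v = v.1 • ((1, 0) : ℝ × ℝ) + v.2 • ((0, 1) : ℝ × ℝ) by simp]
  simp only [map_add, map_smul, smul_eq_mul, dirDeriv]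

lemma contDiff_lap (hf : ContDiff ℝ (⊤ : ℕ∞) f) : ContDiff ℝ (⊤ : ℕ∞) (lap f) :=
  (contDiff_dirDeriv (contDiff_dirDeriv hf _) _).add (contDiff_dirDeriv (contDiff_dirDeriv hf _) _)

lemma lap_const_mul (c : ℝ) (f : ℝ × ℝ → ℝ) (p : ℝ × ℝ) :
    lap (fun q => c * f q) p = c * lap f p := by
  simp only [lap, dirDeriv_const_mul, mul_add]

lemma sq_mul_integral_comp_smul_sub (f : ℝ × ℝ → ℝ) {a : ℝ} (ha : a ≠ 0) (c : ℝ × ℝ) :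
    a ^ 2 * ∫ x, f (a • x - c) = ∫ x, f x := by
  have hdim : Module.finrank ℝ (ℝ × ℝ) = 2 := by simp
  rw [integral_comp_smul_sub, hdim, abs_of_nonneg (by positivity),
    mul_inv_cancel_left₀ (pow_ne_zero 2 ha)]

protected lemma IsTest.continuous (hf : IsTest f) : Continuous f := hf.1.continuous

protected lemma IsTest.differentiable (hf : IsTest f) : Differentiable ℝ f :=
  hf.1.differentiable (by simp)

protected lemma IsTest.integrable (hf : IsTest f) : Integrable f :=
  hf.continuous.integrable_of_hasCompactSupport hf.2

protected lemma IsTest.dirDeriv (hf : IsTest f) (v : ℝ × ℝ) : IsTest (dirDeriv v f) :=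
  ⟨contDiff_dirDeriv hf.1 v, hasCompactSupport_dirDeriv hf.2 v⟩

lemma IsTest.add (hf : IsTest f) (hg : IsTest g) : IsTest (fun p => f p + g p) :=
  ⟨hf.1.add hg.1, hf.2.add hg.2⟩

lemma IsTest.const_mul (hf : IsTest f) (c : ℝ) : IsTest (fun p => c * f p) :=
  ⟨contDiff_const.mul hf.1, hf.2.mul_left⟩

protected lemma IsTest.lap (hf : IsTest f) : IsTest (lap f) :=
  ((hf.dirDeriv _).dirDeriv _).add ((hf.dirDeriv _).dirDeriv _)

lemma IsTest.integrable_mul (hg : IsTest g) (hf : Integrable f) :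
    Integrable (fun p => f p * g p) := by
  obtain ⟨C, hC⟩ := hg.2.exists_bound_of_continuous hg.continuous
  exact hf.mul_bdd hg.continuous.aestronglyMeasurable (.of_forall hC)

protected lemma IsTest.integral_mul_dirDeriv (hf : IsTest f) (hg : IsTest g) (v : ℝ × ℝ) :
    ∫ p, f p * dirDeriv v g p = -∫ p, dirDeriv v f p * g p :=
  integral_mul_dirDeriv (hf.1.of_le (by simp)) (hg.1.of_le (by simp)) hg.2 v

lemma exists_isTest_eq_const_on_closedBall (C : ℝ) (hC : 0 ≤ C) (r : ℝ) (hr : 0 < r) :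
    ∃ η : ℝ × ℝ → ℝ, IsTest η ∧ (∀ p, 0 ≤ η p) ∧ ∀ p ∈ Metric.closedBall 0 r, η p = C := by
  let χ : ContDiffBump (0 : ℝ × ℝ) := ⟨r, r + 1, hr, by linarith⟩
  exact ⟨fun p => C * χ p, IsTest.const_mul ⟨χ.contDiff, χ.hasCompactSupport⟩ C,
    fun p => mul_nonneg hC χ.nonneg, fun p hp => by simp [χ.one_of_mem_closedBall hp]⟩

/-- Smooth functions on `ℝ²` supported in the open unit ball, which for the norm of `ℝ × ℝ` is the
square `(-1, 1)²`. The support is not closed up, so that it may touch the boundary of the square. -/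
def IsUnitTest (f : ℝ × ℝ → ℝ) : Prop :=
  ContDiff ℝ (⊤ : ℕ∞) f ∧ Function.support f ⊆ Metric.ball 0 1

lemma IsUnitTest.eq_zero (hf : IsUnitTest f) {p : ℝ × ℝ} (hp : p ∉ Metric.ball 0 1) : f p = 0 :=
  Function.notMem_support.1 fun h => hp (hf.2 h)

lemma IsUnitTest.tsupport_subset (hf : IsUnitTest f) : tsupport f ⊆ Metric.closedBall 0 1 :=
  (closure_mono hf.2).trans Metric.closure_ball_subset_closedBall

lemma IsUnitTest.isTest (hf : IsUnitTest f) : IsTest f :=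
  ⟨hf.1, (isCompact_closedBall 0 1).of_isClosed_subset (isClosed_tsupport f) hf.tsupport_subset⟩

lemma isUnitTest_of_support_subset_closedBall (hf : ContDiff ℝ (⊤ : ℕ∞) f)
    (hsupp : Function.support f ⊆ Metric.closedBall 0 1) : IsUnitTest f :=
  ⟨hf, by
    simpa only [interior_closedBall (0 : ℝ × ℝ) one_ne_zero] using
      interior_maximal hsupp hf.continuous.isOpen_support⟩

protected lemma IsUnitTest.dirDeriv (hf : IsUnitTest f) (v : ℝ × ℝ) : IsUnitTest (dirDeriv v f) :=
  isUnitTest_of_support_subset_closedBall (contDiff_dirDeriv hf.1 v)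
    ((support_dirDeriv_subset v).trans hf.tsupport_subset)

protected lemma IsUnitTest.lap (hf : IsUnitTest f) : IsUnitTest (lap f) :=
  ⟨contDiff_lap hf.1, fun _ hp => by_contra fun h => hp <| by
    simp only [lap, ((hf.dirDeriv _).dirDeriv _).eq_zero h, add_zero]⟩

end TestFunctions

section LogPotential

open Topology

/-- The function `log (x² + y²)` on `ℝ²`, a multiple of the fundamental solution of the
Laplacian. -/
def logPot (p : ℝ × ℝ) : ℝ := log (p.1 ^ 2 + p.2 ^ 2)

variable {p : ℝ × ℝ}

lemma sq_add_sq_pos (hp : p ≠ 0) : 0 < p.1 ^ 2 + p.2 ^ 2 := by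
  contrapose! hp
  have h₁ : p.1 ^ 2 = 0 := by nlinarith
  have h₂ : p.2 ^ 2 = 0 := by nlinarith
  exact Prod.ext (pow_eq_zero_iff two_ne_zero |>.1 h₁) (pow_eq_zero_iff two_ne_zero |>.1 h₂)

lemma hasFDerivAt_sq_add_sq (p : ℝ × ℝ) :
    HasFDerivAt (fun q : ℝ × ℝ => q.1 ^ 2 + q.2 ^ 2)
      ((2 * p.1) • ContinuousLinearMap.fst ℝ ℝ ℝ +
        (2 * p.2) • ContinuousLinearMap.snd ℝ ℝ ℝ) p := by
  simpa using HasFDerivAt.fun_add ((hasFDerivAt_fst (𝕜 := ℝ) (p := p)).pow 2)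
    ((hasFDerivAt_snd (𝕜 := ℝ) (p := p)).pow 2)

lemma dirDeriv_logPot (hp : p ≠ 0) (v : ℝ × ℝ) :
    dirDeriv v logPot p = 2 * (p.1 * v.1 + p.2 * v.2) / (p.1 ^ 2 + p.2 ^ 2) := by
  have hlog : HasFDerivAt logPot _ p := (hasFDerivAt_sq_add_sq p).log (sq_add_sq_pos hp).ne'
  rw [dirDeriv, hlog.fderiv]
  simp only [smul_apply, add_apply, ContinuousLinearMap.coe_fst', ContinuousLinearMap.coe_snd',
    smul_eq_mul]
  ring

lemma dirDeriv_dirDeriv_logPot (hp : p ≠ 0) (v w : ℝ × ℝ) :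
    dirDeriv w (dirDeriv v logPot) p = 2 * (v.1 * w.1 + v.2 * w.2) / (p.1 ^ 2 + p.2 ^ 2) -
      4 * (p.1 * v.1 + p.2 * v.2) * (p.1 * w.1 + p.2 * w.2) / (p.1 ^ 2 + p.2 ^ 2) ^ 2 := by
  have hfirst : dirDeriv v logPot =ᶠ[𝓝 p]
      fun q => 2 * (q.1 * v.1 + q.2 * v.2) * (q.1 ^ 2 + q.2 ^ 2)⁻¹ :=
    (eventually_ne_nhds hp).mono fun q hq => dirDeriv_logPot hq v
  have hnum : HasFDerivAt (fun q : ℝ × ℝ => 2 * (q.1 * v.1 + q.2 * v.2)) _ p :=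
    ((hasFDerivAt_fst (𝕜 := ℝ) (p := p)).mul_const v.1 |>.fun_add
      ((hasFDerivAt_snd (𝕜 := ℝ) (p := p)).mul_const v.2)).const_mul 2
  have hne := (sq_add_sq_pos hp).ne'
  have hinv : HasFDerivAt (fun q : ℝ × ℝ => (q.1 ^ 2 + q.2 ^ 2)⁻¹) _ p :=
    (hasDerivAt_inv hne).comp_hasFDerivAt p (hasFDerivAt_sq_add_sq p)
  rw [dirDeriv_congr hfirst, dirDeriv, (hnum.fun_mul hinv).fderiv]
  simp only [smul_apply, add_apply, ContinuousLinearMap.coe_fst', ContinuousLinearMap.coe_snd',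
    smul_eq_mul]
  field_simp
  ring

lemma lap_logPot (hp : p ≠ 0) : lap logPot p = 0 := by
  have hne := (sq_add_sq_pos hp).ne'
  rw [lap, dirDeriv_dirDeriv_logPot hp, dirDeriv_dirDeriv_logPot hp]
  field_simp
  ring

/-- The smooth cutoff used to remove the singularity of `logPot` at the origin. -/
def logCutoff : ContDiffBump (0 : ℝ × ℝ) := ⟨1 / 2, 1, by norm_num, by norm_num⟩

/-- A smooth function equal to `logPot` outside the unit ball and to `0` on the ball of
radius `1 / 2`. -/
def regLog (p : ℝ × ℝ) : ℝ :=
  log ((p.1 ^ 2 + p.2 ^ 2) * (1 - logCutoff p) + logCutoff p)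

lemma contDiff_regLog : ContDiff ℝ (⊤ : ℕ∞) regLog := by
  have hχ : ContDiff ℝ (⊤ : ℕ∞) logCutoff := logCutoff.contDiff
  refine ContDiff.log (by fun_prop) fun p => ne_of_gt ?_
  have hχ₁ : 0 ≤ 1 - logCutoff p := sub_nonneg.2 logCutoff.le_one
  rcases eq_or_ne p 0 with rfl | hp
  · rw [logCutoff.one_of_mem_closedBall (by simp [logCutoff])]
    norm_num
  · rcases logCutoff.nonneg (x := p) |>.eq_or_lt with h | h
    · simpa [← h] using sq_add_sq_pos hp
    · have := mul_nonneg (sq_add_sq_pos hp).le hχ₁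
      positivity

lemma regLog_of_norm_le (hp : ‖p‖ ≤ 1 / 2) : regLog p = 0 := by
  simp [regLog, logCutoff.one_of_mem_closedBall (mem_closedBall_zero_iff.2 hp)]

lemma regLog_of_one_le_norm (hp : 1 ≤ ‖p‖) : regLog p = logPot p := by
  have h : logCutoff p = 0 := logCutoff.zero_of_le_dist (by rwa [dist_zero_right])
  simp [regLog, logPot, h]

lemma dirDeriv_dirDeriv_regLog_of_norm_lt (hp : ‖p‖ < 1 / 2) (v w : ℝ × ℝ) :
    dirDeriv w (dirDeriv v regLog) p = 0 := by
  have h : regLog =ᶠ[𝓝 p] fun _ => 0 :=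
    (continuous_norm.tendsto p |>.eventually_lt_const hp).mono fun _ hq => regLog_of_norm_le hq.le
  rw [dirDeriv_congr (eventually_dirDeriv_eq h v), dirDeriv_const, dirDeriv_const]

lemma dirDeriv_dirDeriv_regLog_of_one_lt_norm (hp : 1 < ‖p‖) (v w : ℝ × ℝ) :
    dirDeriv w (dirDeriv v regLog) p = dirDeriv w (dirDeriv v logPot) p := by
  have h : regLog =ᶠ[𝓝 p] logPot :=
    (continuous_norm.tendsto p |>.eventually_const_lt hp).mono
      fun _ hq => regLog_of_one_le_norm hq.le
  exact dirDeriv_congr (eventually_dirDeriv_eq h v) w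

lemma isUnitTest_lap_regLog : IsUnitTest (lap regLog) := by
  refine isUnitTest_of_support_subset_closedBall (contDiff_lap contDiff_regLog) fun p hp => ?_
  by_contra h
  have hp₁ : 1 < ‖p‖ := by simpa using h
  have hp₀ : p ≠ 0 := norm_pos_iff.1 (one_pos.trans hp₁)
  refine hp ?_
  simpa only [lap, dirDeriv_dirDeriv_regLog_of_one_lt_norm hp₁] using lap_logPot hp₀

/-- The difference of `regLog` at the scales `1 / L` and `1`, normalised to vanish outside the unit
ball. Its Laplacian is bounded in `L¹` uniformly in `L`, while it coincides with `-logPot`, up to a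
constant, on an annulus containing `log L` dyadic shells. -/
def logBump (L : ℝ) (p : ℝ × ℝ) : ℝ := regLog (L • p - 0) - regLog p - log (L ^ 2)

variable {L : ℝ}

lemma logPot_smul (hL : L ≠ 0) (hp : p ≠ 0) : logPot (L • p) = log (L ^ 2) + logPot p := by
  rw [logPot, logPot, ← log_mul (pow_ne_zero 2 hL) (sq_add_sq_pos hp).ne']
  simp only [Prod.smul_fst, Prod.smul_snd, smul_eq_mul]
  ring_nf

lemma isUnitTest_logBump (hL : 1 ≤ L) : IsUnitTest (logBump L) := by
  have hreg := contDiff_regLog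
  refine ⟨((hreg.comp (by fun_prop)).sub hreg).sub contDiff_const, fun p hp => ?_⟩
  by_contra h
  have hp₁ : 1 ≤ ‖p‖ := by simpa using h
  have hLp : 1 ≤ ‖L • p‖ := by
    rw [norm_smul, norm_of_nonneg (by linarith)]
    nlinarith
  refine hp ?_
  rw [logBump, sub_zero, regLog_of_one_le_norm hp₁, regLog_of_one_le_norm hLp,
    logPot_smul (by linarith) (norm_pos_iff.1 (by linarith))]
  ring

lemma dirDeriv_dirDeriv_logBump (L : ℝ) (v w : ℝ × ℝ) :
    dirDeriv w (dirDeriv v (logBump L)) p =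
      L ^ 2 * dirDeriv w (dirDeriv v regLog) (L • p) - dirDeriv w (dirDeriv v regLog) p := by
  have hreg : Differentiable ℝ regLog := contDiff_regLog.differentiable (by simp)
  have hreg' : Differentiable ℝ (dirDeriv v regLog) :=
    (contDiff_dirDeriv contDiff_regLog v).differentiable (by simp)
  have hdil : Differentiable ℝ fun q : ℝ × ℝ => L • q - 0 := by fun_prop
  have first_deriv : dirDeriv v (logBump L) =
      fun q => dirDeriv v (fun q => regLog (L • q - 0)) q - dirDeriv v regLog q := by
    funext q
    change dirDeriv v (fun q => regLog (L • q - 0) - regLog q - log (L ^ 2)) q = _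
    rw [dirDeriv, fderiv_sub_const]
    exact dirDeriv_sub (hreg.comp hdil q) (hreg q) v
  have hdil' : Differentiable ℝ (dirDeriv v fun q => regLog (L • q - 0)) :=
    (contDiff_dirDeriv (contDiff_regLog.comp (by fun_prop)) v).differentiable (by simp)
  rw [first_deriv, dirDeriv_sub (hdil' p) (hreg' p), dirDeriv_dirDeriv_comp_smul_sub, sub_zero]

lemma integral_abs_lap_logBump_le (hL : 1 ≤ L) :
    ∫ p, |lap (logBump L) p| ≤ 2 * ∫ p, |lap regLog p| := by
  have hint : Integrable fun p => |lap regLog p| := isUnitTest_lap_regLog.isTest.integrable.abs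
  have hint' : Integrable fun p => L ^ 2 * |lap regLog (L • p - 0)| :=
    ((hint.comp_sub_right 0).comp_smul (by linarith)).const_mul _
  calc
    ∫ p, |lap (logBump L) p| ≤ ∫ p, (L ^ 2 * |lap regLog (L • p - 0)| + |lap regLog p|) := by
      refine integral_mono ((isUnitTest_logBump hL).lap.isTest.integrable.abs) (hint'.add hint)
        fun p => ?_
      have hlap : lap (logBump L) p = L ^ 2 * lap regLog (L • p) - lap regLog p := by
        simp only [lap, dirDeriv_dirDeriv_logBump]
        ring
      simp only [hlap, sub_zero]
      exact (abs_sub _ _).trans_eq (by rw [abs_mul, abs_sq])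
    _ = 2 * ∫ p, |lap regLog p| := by
      rw [integral_add hint' hint, integral_const_mul,
        sq_mul_integral_comp_smul_sub (fun p => |lap regLog p|) (by linarith)]
      ring

lemma dirDeriv_dirDeriv_logBump_of_mem_annulus (hL : 1 < L * ‖p‖) (hp : ‖p‖ < 1 / 2) :
    ∂₂ (∂₁ (logBump L)) p = -(4 * p.1 * p.2 / (p.1 ^ 2 + p.2 ^ 2) ^ 2) := by
  have hp₀ : p ≠ 0 := by rintro rfl; norm_num at hL
  have hL₀ : L ≠ 0 := by rintro rfl; norm_num at hL
  have hLp : 1 < ‖L • p‖ := by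
    rw [norm_smul]
    exact hL.trans_le (mul_le_mul_of_nonneg_right (le_abs_self L) (norm_nonneg p))
  have hne := (sq_add_sq_pos hp₀).ne'
  rw [dirDeriv_dirDeriv_logBump, dirDeriv_dirDeriv_regLog_of_norm_lt hp,
    dirDeriv_dirDeriv_regLog_of_one_lt_norm hLp, dirDeriv_dirDeriv_logPot (smul_ne_zero hL₀ hp₀)]
  simp only [Prod.smul_fst, Prod.smul_snd, smul_eq_mul]
  field_simp
  ring

end LogPotential

lemma abs_sum_le_of_unique_ne_zero {ι : Type*} {s : Finset ι} {f : ι → ℝ} {B : ℝ} (hB : 0 ≤ B)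
    (hf : ∀ i ∈ s, |f i| ≤ B) (huniq : ∀ i ∈ s, ∀ j ∈ s, f i ≠ 0 → f j ≠ 0 → i = j) :
    |∑ i ∈ s, f i| ≤ B := by
  by_cases h : ∃ i ∈ s, f i ≠ 0
  · obtain ⟨i, hi, hfi⟩ := h
    rw [Finset.sum_eq_single_of_mem i hi fun j hj hji =>
      by_contra fun hfj => hji (huniq j hj i hi hfj hfi)]
    exact hf i hi
  · push Not at h
    rwa [Finset.sum_eq_zero h, abs_zero]

section DyadicBumps

/-- A bump function supported in the square `(1/4, 1/2)²`, whose dyadic dilates have disjoint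
supports. -/
def shellBump : ContDiffBump ((3 / 8, 3 / 8) : ℝ × ℝ) := ⟨1 / 16, 1 / 8, by norm_num, by norm_num⟩

/-- The sum of the dilates of `shellBump` to the first `n` dyadic shells. -/
def dyadicBumps (n : ℕ) (p : ℝ × ℝ) : ℝ := ∑ j ∈ Finset.range n, shellBump ((2 : ℝ) ^ j • p)

lemma mem_Ioo_of_shellBump_ne_zero {p : ℝ × ℝ} (hp : shellBump p ≠ 0) :
    p.1 ∈ Set.Ioo (1 / 4) (1 / 2) ∧ p.2 ∈ Set.Ioo (1 / 4) (1 / 2) := by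
  have h : p ∈ Metric.ball ((3 / 8, 3 / 8) : ℝ × ℝ) (1 / 8) :=
    shellBump.support_eq ▸ Function.mem_support.2 hp
  rw [← ball_prod_same, Real.ball_eq_Ioo] at h
  obtain ⟨⟨h₁, h₂⟩, h₃, h₄⟩ := h
  exact ⟨⟨by linarith, by linarith⟩, by linarith, by linarith⟩

lemma eq_of_shellBump_ne_zero {p : ℝ × ℝ} {i j : ℕ} (hi : shellBump ((2 : ℝ) ^ i • p) ≠ 0)
    (hj : shellBump ((2 : ℝ) ^ j • p) ≠ 0) : i = j := by
  wlog hij : i < j generalizing i j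
  · exact (not_lt.1 hij).eq_or_lt.elim Eq.symm fun h => (this hj hi h).symm
  have hi₁ := (mem_Ioo_of_shellBump_ne_zero hi).1.1
  have hj₁ := (mem_Ioo_of_shellBump_ne_zero hj).1.2
  simp only [Prod.smul_fst, smul_eq_mul] at hi₁ hj₁
  have hpow : (2 : ℝ) * 2 ^ i ≤ 2 ^ j := by
    rw [← pow_succ']
    exact pow_le_pow_right₀ one_le_two hij
  have hp : 0 < p.1 := pos_of_mul_pos_right (lt_trans (by norm_num) hi₁) (by positivity)
  nlinarith

lemma abs_dyadicBumps_le_one (n : ℕ) (p : ℝ × ℝ) : |dyadicBumps n p| ≤ 1 :=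
  abs_sum_le_of_unique_ne_zero zero_le_one
    (fun _ _ => by rw [abs_of_nonneg shellBump.nonneg]; exact shellBump.le_one)
    fun _ _ _ _ => eq_of_shellBump_ne_zero

lemma norm_mem_of_shellBump_ne_zero {p : ℝ × ℝ} {j : ℕ} (h : shellBump ((2 : ℝ) ^ j • p) ≠ 0) :
    ‖p‖ < 1 / 2 ∧ 1 / 4 < (2 : ℝ) ^ j * ‖p‖ := by
  obtain ⟨h₁, h₂⟩ := mem_Ioo_of_shellBump_ne_zero h
  have hnorm : (2 : ℝ) ^ j * ‖p‖ = ‖(2 : ℝ) ^ j • p‖ := by simp [norm_smul]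
  have hlow : 1 / 4 < ‖(2 : ℝ) ^ j • p‖ := h₁.1.trans_le ((le_norm_self _).trans (norm_fst_le _))
  have hup : ‖(2 : ℝ) ^ j • p‖ < 1 / 2 := by
    rw [Prod.norm_def, Real.norm_eq_abs, Real.norm_eq_abs, max_lt_iff, abs_lt, abs_lt]
    exact ⟨⟨by linarith [h₁.1], h₁.2⟩, ⟨by linarith [h₂.1], h₂.2⟩⟩
  refine ⟨lt_of_le_of_lt ?_ (hnorm ▸ hup), hnorm ▸ hlow⟩
  exact le_mul_of_one_le_left (norm_nonneg p) (one_le_pow₀ one_le_two)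

lemma isUnitTest_dyadicBumps (n : ℕ) : IsUnitTest (dyadicBumps n) := by
  refine ⟨ContDiff.sum fun j _ => shellBump.contDiff.comp (by fun_prop), fun p hp => ?_⟩
  obtain ⟨j, -, hj⟩ := Finset.exists_ne_zero_of_sum_ne_zero hp
  exact mem_ball_zero_iff.2 ((norm_mem_of_shellBump_ne_zero hj).1.trans (by norm_num))

lemma integral_sq_mul_shellBump (j : ℕ) :
    ∫ p : ℝ × ℝ, ((2 : ℝ) ^ j) ^ 2 * shellBump ((2 : ℝ) ^ j • p) = ∫ p, shellBump p := by
  simpa only [sub_zero, integral_const_mul] using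
    sq_mul_integral_comp_smul_sub shellBump (pow_ne_zero j two_ne_zero) 0

lemma sq_mul_shellBump_le {p : ℝ × ℝ} {n j : ℕ} (hj : j < n) :
    ((2 : ℝ) ^ j) ^ 2 * shellBump ((2 : ℝ) ^ j • p) ≤
      -∂₂ (∂₁ (logBump (2 ^ (n + 1)))) p * shellBump ((2 : ℝ) ^ j • p) := by
  by_cases h : shellBump ((2 : ℝ) ^ j • p) = 0
  · rw [h, mul_zero, mul_zero]
  refine mul_le_mul_of_nonneg_right ?_ shellBump.nonneg
  obtain ⟨hp, hp'⟩ := norm_mem_of_shellBump_ne_zero h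
  have hpow : (4 : ℝ) * 2 ^ j ≤ 2 ^ (n + 1) := by
    rw [show (4 : ℝ) * 2 ^ j = 2 ^ (j + 2) by ring]
    exact pow_le_pow_right₀ one_le_two (by omega)
  have hL : 1 < (2 : ℝ) ^ (n + 1) * ‖p‖ := by nlinarith [norm_nonneg p]
  rw [dirDeriv_dirDeriv_logBump_of_mem_annulus hL hp, neg_neg]
  obtain ⟨⟨hx, hx'⟩, hy, hy'⟩ := mem_Ioo_of_shellBump_ne_zero h
  simp only [Prod.smul_fst, Prod.smul_snd, smul_eq_mul] at hx hx' hy hy'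
  set a : ℝ := 2 ^ j
  have ha : 0 < a := by positivity
  have hr : 0 < p.1 ^ 2 + p.2 ^ 2 := sq_add_sq_pos fun h₀ => by norm_num [h₀] at hx
  have hprod : 1 / 16 ≤ (a * p.1) * (a * p.2) := by nlinarith
  have hsum : (a * p.1) ^ 2 + (a * p.2) ^ 2 ≤ 1 / 2 := by nlinarith
  rw [le_div_iff₀ (by positivity)]
  have hsq : ((a * p.1) ^ 2 + (a * p.2) ^ 2) ^ 2 ≤ 1 / 4 := by nlinarith [sq_nonneg (a * p.1)]
  refine le_of_mul_le_mul_left ?_ (pow_pos ha 2)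
  linear_combination 4 * hprod + hsq

/-- An instance of Ornstein's `L¹` non-inequality. -/
lemma exists_lt_integral_mixed (C : ℝ) :
    ∃ ψ φ : ℝ × ℝ → ℝ, IsUnitTest ψ ∧ IsUnitTest φ ∧ (∀ p, |φ p| ≤ 1) ∧
      C * ∫ p, |lap ψ p| < ∫ p, ∂₁ ψ p * ∂₂ φ p := by
  have hω : 0 < ∫ p, shellBump p := shellBump.integral_pos
  obtain ⟨n, hn⟩ := exists_nat_gt (|C| * (2 * ∫ p, |lap regLog p|) / ∫ p, shellBump p)
  rw [div_lt_iff₀ hω] at hn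
  have hL : (1 : ℝ) ≤ 2 ^ (n + 1) := one_le_pow₀ one_le_two
  have hψ := isUnitTest_logBump hL
  have hφ := isUnitTest_dyadicBumps n
  refine ⟨logBump (2 ^ (n + 1)), dyadicBumps n, hψ, hφ, abs_dyadicBumps_le_one n, ?_⟩
  have hbump (j : ℕ) :
      Integrable fun p : ℝ × ℝ => ((2 : ℝ) ^ j) ^ 2 * shellBump ((2 : ℝ) ^ j • p) :=
    (Integrable.comp_smul shellBump.integrable (by positivity)).const_mul _
  calc
    C * ∫ p, |lap (logBump (2 ^ (n + 1))) p| ≤ |C| * (2 * ∫ p, |lap regLog p|) :=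
      mul_le_mul (le_abs_self C) (integral_abs_lap_logBump_le hL)
        (integral_nonneg fun _ => abs_nonneg _) (abs_nonneg C)
    _ < n * ∫ p, shellBump p := hn
    _ = ∫ p, ∑ j ∈ Finset.range n, ((2 : ℝ) ^ j) ^ 2 * shellBump ((2 : ℝ) ^ j • p) := by
      rw [integral_finsetSum _ fun j _ => hbump j]
      simp only [integral_sq_mul_shellBump, Finset.sum_const, Finset.card_range, nsmul_eq_mul]
    _ ≤ ∫ p, -∂₂ (∂₁ (logBump (2 ^ (n + 1)))) p * dyadicBumps n p := by
      refine integral_mono (integrable_finsetSum _ fun j _ => hbump j)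
        (hφ.isTest.integrable_mul ((hψ.dirDeriv _).dirDeriv _).isTest.integrable.neg) fun p => ?_
      simp only [dyadicBumps, Finset.mul_sum]
      exact Finset.sum_le_sum fun j hj => sq_mul_shellBump_le (Finset.mem_range.1 hj)
    _ = ∫ p, ∂₁ (logBump (2 ^ (n + 1))) p * ∂₂ (dyadicBumps n) p := by
      rw [(hψ.dirDeriv _).isTest.integral_mul_dirDeriv hφ.isTest]
      simp only [neg_mul, integral_neg]

end DyadicBumps

section Tiling

/-- The centres `(±1, ±1)` of the four quadrants of the square `(-2, 2)²`. -/
def tileCenter (i : Bool × Bool) : ℝ × ℝ := (cond i.1 1 (-1), cond i.2 1 (-1))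

/-- Four half-size copies of `f`, placed in the quadrants of the unit ball `(-1, 1)²`. -/
def tile (f : ℝ × ℝ → ℝ) (p : ℝ × ℝ) : ℝ := ∑ i, f ((2 : ℝ) • p - tileCenter i)

variable {f g ψ φ : ℝ × ℝ → ℝ} {p : ℝ × ℝ}

lemma norm_tileCenter (i : Bool × Bool) : ‖tileCenter i‖ = 1 := by
  rcases i with ⟨_ | _, _ | _⟩ <;> simp [tileCenter, Prod.norm_def]

lemma eq_of_mem_ball_tileCenter {i j : Bool × Bool}
    (hi : p - tileCenter i ∈ Metric.ball 0 1) (hj : p - tileCenter j ∈ Metric.ball 0 1) :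
    i = j := by
  have eq_of_abs_lt {t : ℝ} {a b : Bool} (ha : |t - cond a 1 (-1)| < 1)
      (hb : |t - cond b 1 (-1)| < 1) : a = b := by
    rw [abs_lt] at ha hb
    cases a <;> cases b <;> simp only [cond_true, cond_false] at ha hb ⊢ <;> linarith
  rw [mem_ball_zero_iff, Prod.norm_def, max_lt_iff] at hi hj
  exact Prod.ext (eq_of_abs_lt hi.1 hj.1) (eq_of_abs_lt hi.2 hj.2)

lemma isUnitTest_tile (hf : IsUnitTest f) : IsUnitTest (tile f) := by
  refine ⟨ContDiff.sum fun i _ => hf.1.comp (by fun_prop), fun p hp => ?_⟩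
  obtain ⟨i, -, hi⟩ := Finset.exists_ne_zero_of_sum_ne_zero hp
  have hlt : ‖(2 : ℝ) • p - tileCenter i‖ < 1 := mem_ball_zero_iff.1 (hf.2 hi)
  have htri : ‖(2 : ℝ) • p‖ ≤ ‖(2 : ℝ) • p - tileCenter i‖ + ‖tileCenter i‖ :=
    norm_le_norm_sub_add _ _
  rw [norm_smul, Real.norm_ofNat, norm_tileCenter] at htri
  exact mem_ball_zero_iff.2 (by linarith)

lemma abs_tile_le (hf : IsUnitTest f) {B : ℝ} (hB : ∀ q, |f q| ≤ B) (p : ℝ × ℝ) :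
    |tile f p| ≤ B :=
  abs_sum_le_of_unique_ne_zero ((abs_nonneg _).trans (hB 0)) (fun _ _ => hB _)
    fun _ _ _ _ hi hj => eq_of_mem_ball_tileCenter (hf.2 hi) (hf.2 hj)

lemma tile_mul_tile (hf : IsUnitTest f) (hg : IsUnitTest g) (p : ℝ × ℝ) :
    tile f p * tile g p = tile (fun q => f q * g q) p := by
  rw [tile, tile, Finset.sum_mul]
  refine Finset.sum_congr rfl fun i _ => ?_
  by_cases hi : (2 : ℝ) • p - tileCenter i ∈ Metric.ball 0 1
  · rw [Finset.sum_eq_single_of_mem i (Finset.mem_univ i) fun j _ hji =>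
      hg.eq_zero fun hj => hji (eq_of_mem_ball_tileCenter hj hi)]
  · simp only [hf.eq_zero hi, zero_mul]

lemma dirDeriv_tile (hf : Differentiable ℝ f) (v : ℝ × ℝ) :
    dirDeriv v (tile f) = fun p => 2 * tile (dirDeriv v f) p := by
  funext p
  have hsum := dirDeriv_sum (F := fun i q => f ((2 : ℝ) • q - tileCenter i)) (s := Finset.univ)
    (x := p) (fun i _ => by fun_prop) v
  refine hsum.trans ?_
  simp only [dirDeriv_comp_smul_sub, tile, Finset.mul_sum]

lemma lap_tile (hf : IsTest f) : lap (tile f) p = 4 * tile (lap f) p := by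
  have second_deriv (v : ℝ × ℝ) :
      dirDeriv v (dirDeriv v (tile f)) p = 4 * tile (dirDeriv v (dirDeriv v f)) p := by
    rw [dirDeriv_tile hf.differentiable, dirDeriv_const_mul,
      dirDeriv_tile (hf.dirDeriv v).differentiable]
    ring
  rw [lap, second_deriv, second_deriv, ← mul_add, tile, tile, ← Finset.sum_add_distrib]
  rfl

lemma integrable_tile_summand (hf : Integrable f) (i : Bool × Bool) :
    Integrable fun p => f ((2 : ℝ) • p - tileCenter i) :=
  (hf.comp_sub_right (tileCenter i)).comp_smul two_ne_zero

lemma integral_tile (hf : Integrable f) : ∫ p, tile f p = ∫ p, f p := by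
  have quarter (i : Bool × Bool) :
      ∫ p, f ((2 : ℝ) • p - tileCenter i) = (∫ p, f p) / 4 := by
    rw [← sq_mul_integral_comp_smul_sub f two_ne_zero (tileCenter i)]
    ring
  have hcard : Fintype.card (Bool × Bool) = 4 := rfl
  simp only [tile, integral_finsetSum _ fun i _ => integrable_tile_summand hf i, quarter,
    Finset.sum_const, Finset.card_univ, hcard, nsmul_eq_mul]
  ring

lemma integral_abs_tile_le (hf : Integrable f) : ∫ p, |tile f p| ≤ ∫ p, |f p| := by
  rw [← integral_tile hf.abs]
  exact integral_mono (integrable_finsetSum _ fun i _ => integrable_tile_summand hf i).abs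
    (integrable_finsetSum _ fun i _ => integrable_tile_summand hf.abs i)
    fun _ => Finset.abs_sum_le_sum_abs _ _

lemma integral_abs_lap_tile_le (hψ : IsTest ψ) :
    ∫ p, |lap (fun q => 1 / 4 * tile ψ q) p| ≤ ∫ p, |lap ψ p| := by
  have hlap (p : ℝ × ℝ) : lap (fun q => 1 / 4 * tile ψ q) p = tile (lap ψ) p := by
    rw [lap_const_mul, lap_tile hψ]
    ring
  simpa only [hlap] using integral_abs_tile_le hψ.lap.integrable

lemma integral_mixed_tile (hψ : IsUnitTest ψ) (hφ : IsUnitTest φ) :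
    ∫ p, ∂₁ (fun q => 1 / 4 * tile ψ q) p * ∂₂ (tile φ) p = ∫ p, ∂₁ ψ p * ∂₂ φ p := by
  have hprod (p : ℝ × ℝ) : ∂₁ (fun q => 1 / 4 * tile ψ q) p * ∂₂ (tile φ) p =
      tile (fun q => ∂₁ ψ q * ∂₂ φ q) p := by
    rw [dirDeriv_const_mul, dirDeriv_tile hψ.isTest.differentiable,
      dirDeriv_tile hφ.isTest.differentiable, ← tile_mul_tile (hψ.dirDeriv _) (hφ.dirDeriv _)]
    ring
  simp only [hprod]
  exact integral_tile ((hφ.dirDeriv _).isTest.integrable_mul (hψ.dirDeriv _).isTest.integrable)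

/-- The a priori bound, with constant `C`, of the mixed derivative of a function by its Laplacian
in `L¹` and by `ε` times its first `x`-derivative in `L^∞`. -/
def MixedBound (C ε : ℝ) : Prop :=
  ∀ ψ φ : ℝ × ℝ → ℝ, ∀ s : ℝ, IsUnitTest ψ → IsUnitTest φ → (∀ p, |φ p| ≤ 1) →
    (∀ p, |∂₁ ψ p| ≤ s) → ∫ p, ∂₁ ψ p * ∂₂ φ p ≤ C * (ε * s + ∫ p, |lap ψ p|)

/-- Tiling preserves the two `L¹` quantities but halves the `L^∞` one. -/
lemma mixedBound_half {C ε : ℝ} (hC : 0 ≤ C) (h : MixedBound C ε) : MixedBound C (ε / 2) := by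
  intro ψ φ s hψ hφ hφ₁ hs
  have htile := isUnitTest_tile hψ
  have hψ' : IsUnitTest fun q => 1 / 4 * tile ψ q :=
    ⟨contDiff_const.mul htile.1, fun p hp => htile.2 (right_ne_zero_of_mul hp)⟩
  have hs' (p : ℝ × ℝ) : |∂₁ (fun q => 1 / 4 * tile ψ q) p| ≤ s / 2 := by
    have := abs_tile_le (hψ.dirDeriv (1, 0)) hs p
    rw [dirDeriv_const_mul, dirDeriv_tile hψ.isTest.differentiable, abs_mul, abs_mul]
    norm_num
    linarith
  rw [← integral_mixed_tile hψ hφ]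
  refine (h _ _ (s / 2) hψ' (isUnitTest_tile hφ) (abs_tile_le hφ hφ₁) hs').trans ?_
  refine mul_le_mul_of_nonneg_left ?_ hC
  linarith [integral_abs_lap_tile_le hψ.isTest]

lemma not_mixedBound {C ε : ℝ} (hC : 0 ≤ C) : ¬ MixedBound C ε := by
  intro h
  have hpow (n : ℕ) : MixedBound C (ε / 2 ^ n) := by
    induction n with
    | zero => simpa using h
    | succ n ih => simpa only [pow_succ, div_mul_eq_div_div] using mixedBound_half hC ih
  obtain ⟨ψ, φ, hψ, hφ, hφ₁, hlt⟩ := exists_lt_integral_mixed C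
  obtain ⟨s, hs⟩ := (hψ.dirDeriv (1, 0)).isTest.2.exists_bound_of_continuous
    (hψ.dirDeriv (1, 0)).isTest.continuous
  have hlim : Filter.Tendsto (fun n : ℕ => C * (ε / 2 ^ n * s + ∫ p, |lap ψ p|)) Filter.atTop
      (nhds (C * (0 * s + ∫ p, |lap ψ p|))) :=
    (((tendsto_const_nhds.div_atTop (tendsto_pow_atTop_atTop_of_one_lt one_lt_two)).mul_const
      s).add_const _).const_mul C
  rw [zero_mul, zero_add] at hlim
  exact hlt.not_ge (ge_of_tendsto' hlim fun n => hpow n ψ φ s hψ hφ hφ₁ hs)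

end Tiling

section WeakSolutions

variable {u ψ φ : ℝ × ℝ → ℝ} {J : ℝ × ℝ → ℝ × ℝ}

/-- The equation `Δu = div J` on `ℝ²` in the sense of distributions. -/
def LaplacianEqDiv (u : ℝ × ℝ → ℝ) (J : ℝ × ℝ → ℝ × ℝ) : Prop :=
  ∀ φ, IsTest φ → ∫ p, (lap φ p * u p + fderiv ℝ φ p (J p)) = 0

lemma IsTest.integral_lap_mul (hφ : IsTest φ) (hψ : IsTest ψ) :
    ∫ p, lap φ p * ψ p = ∫ p, φ p * lap ψ p := by
  have green (v : ℝ × ℝ) : ∫ p, dirDeriv v (dirDeriv v φ) p * ψ p =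
      ∫ p, φ p * dirDeriv v (dirDeriv v ψ) p := by
    rw [hφ.integral_mul_dirDeriv (hψ.dirDeriv v),
      (hφ.dirDeriv v).integral_mul_dirDeriv hψ, neg_neg]
  have hφψ (v : ℝ × ℝ) := hψ.integrable_mul ((hφ.dirDeriv v).dirDeriv v).integrable
  have hψφ (v : ℝ × ℝ) := ((hψ.dirDeriv v).dirDeriv v).integrable_mul hφ.integrable
  simp only [lap, add_mul, mul_add]
  rw [integral_add (hφψ _) (hφψ _), integral_add (hψφ _) (hψφ _), green, green]

lemma IsTest.integrable_lap_mul (hφ : IsTest φ) (hu : Integrable u) :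
    Integrable fun p => lap φ p * u p := by
  simpa only [mul_comm] using hφ.lap.integrable_mul hu

lemma IsTest.integrable_fderiv_apply (hφ : IsTest φ) (hJ : Integrable J) :
    Integrable fun p => fderiv ℝ φ p (J p) := by
  simp only [fderiv_apply_eq_add]
  exact ((hφ.dirDeriv _).integrable_mul hJ.fst).add ((hφ.dirDeriv _).integrable_mul hJ.snd)

lemma IsTest.integrable_lap_mul_add_fderiv_apply (hφ : IsTest φ) (hu : Integrable u)
    (hJ : Integrable J) : Integrable fun p => lap φ p * u p + fderiv ℝ φ p (J p) :=
  (hφ.integrable_lap_mul hu).add (hφ.integrable_fderiv_apply hJ)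

lemma laplacianEqDiv_of_isTest {J₁ J₂ : ℝ × ℝ → ℝ} (hu : IsTest u) (hJ₁ : IsTest J₁)
    (hJ₂ : IsTest J₂) (h : ∀ p, lap u p = ∂₁ J₁ p + ∂₂ J₂ p) :
    LaplacianEqDiv u fun p => (J₁ p, J₂ p) := by
  intro φ hφ
  have by_parts {f : ℝ × ℝ → ℝ} (hf : IsTest f) (v : ℝ × ℝ) :
      ∫ p, f p * dirDeriv v φ p = -∫ p, φ p * dirDeriv v f p := by
    rw [hf.integral_mul_dirDeriv hφ]
    simp only [mul_comm]
  have flux : ∫ p, fderiv ℝ φ p (J₁ p, J₂ p) = -∫ p, φ p * lap u p := by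
    simp only [fderiv_apply_eq_add, h, mul_add]
    rw [integral_add ((hφ.dirDeriv _).integrable_mul hJ₁.integrable)
        ((hφ.dirDeriv _).integrable_mul hJ₂.integrable), by_parts hJ₁, by_parts hJ₂,
      integral_add ((hJ₁.dirDeriv _).integrable_mul hφ.integrable)
        ((hJ₂.dirDeriv _).integrable_mul hφ.integrable), neg_add]
  rw [integral_add (hφ.integrable_lap_mul hu.integrable)
    (hφ.integrable_fderiv_apply (hJ₁.integrable.prodMk hJ₂.integrable)), flux,
    hφ.integral_lap_mul hu, add_neg_cancel]

lemma laplacianEqDiv_gradient (hu : IsTest u) : LaplacianEqDiv u fun p => (∂₁ u p, ∂₂ u p) :=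
  laplacianEqDiv_of_isTest hu (hu.dirDeriv _) (hu.dirDeriv _) fun _ => rfl

lemma lap_dirDeriv (hu : ContDiff ℝ (⊤ : ℕ∞) u) (v p : ℝ × ℝ) :
    lap (dirDeriv v u) p = dirDeriv v (lap u) p := by
  have hu' (w : ℝ × ℝ) := contDiff_dirDeriv hu w
  have hu'' (w : ℝ × ℝ) : Differentiable ℝ (dirDeriv w (dirDeriv w u)) :=
    (contDiff_dirDeriv (hu' w) w).differentiable (by simp)
  have commute (w : ℝ × ℝ) : dirDeriv w (dirDeriv w (dirDeriv v u)) p =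
      dirDeriv v (dirDeriv w (dirDeriv w u)) p := by
    have h : dirDeriv w (dirDeriv v u) = dirDeriv v (dirDeriv w u) :=
      funext fun _ => dirDeriv_comm (contDiff_infty.1 hu 2) w v
    rw [h, dirDeriv_comm (contDiff_infty.1 (hu' w) 2)]
  rw [lap, commute, commute]
  exact (dirDeriv_add (hu'' _ p) (hu'' _ p) v).symm

lemma laplacianEqDiv_dirDeriv (hψ : IsTest ψ) :
    LaplacianEqDiv (∂₁ ψ) fun p => (lap ψ p, 0) :=
  laplacianEqDiv_of_isTest (hψ.dirDeriv _) hψ.lap ⟨contDiff_const, .zero⟩ fun p => by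
    rw [lap_dirDeriv hψ.1, dirDeriv_const, add_zero]

lemma LaplacianEqDiv.add {u' : ℝ × ℝ → ℝ} {J' : ℝ × ℝ → ℝ × ℝ} (h : LaplacianEqDiv u J)
    (h' : LaplacianEqDiv u' J') (hu : Integrable u) (hJ : Integrable J) (hu' : Integrable u')
    (hJ' : Integrable J') : LaplacianEqDiv (fun p => u p + u' p) fun p => J p + J' p := by
  intro φ hφ
  have hsplit (p : ℝ × ℝ) : lap φ p * (u p + u' p) + fderiv ℝ φ p (J p + J' p) =
      (lap φ p * u p + fderiv ℝ φ p (J p)) + (lap φ p * u' p + fderiv ℝ φ p (J' p)) := by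
    rw [map_add]
    ring
  simp only [hsplit]
  rw [integral_add (hφ.integrable_lap_mul_add_fderiv_apply hu hJ)
    (hφ.integrable_lap_mul_add_fderiv_apply hu' hJ'), h φ hφ, h' φ hφ, add_zero]

/-- The distributional derivative of `u` in the direction `v` is bounded for the supremum norm of
the test function, that is, it is a finite signed measure. -/
def HasFiniteVariation (v : ℝ × ℝ) (u : ℝ × ℝ → ℝ) : Prop :=
  ∃ C, ∀ φ, IsTest φ → (∀ p, |φ p| ≤ 1) → |∫ p, u p * dirDeriv v φ p| ≤ C

lemma HasFiniteVariation.add {w v : ℝ × ℝ → ℝ} {e : ℝ × ℝ} (hw : HasFiniteVariation e w)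
    (hv : HasFiniteVariation e v) (hwi : Integrable w) (hvi : Integrable v) :
    HasFiniteVariation e fun p => w p + v p := by
  obtain ⟨C, hC⟩ := hw
  obtain ⟨D, hD⟩ := hv
  refine ⟨C + D, fun φ hφ hφ₁ => ?_⟩
  simp only [add_mul]
  rw [integral_add ((hφ.dirDeriv e).integrable_mul hwi) ((hφ.dirDeriv e).integrable_mul hvi)]
  exact (abs_add_le _ _).trans (add_le_add (hC φ hφ hφ₁) (hD φ hφ hφ₁))

lemma HasFiniteVariation.const_mul {e : ℝ × ℝ} (hu : HasFiniteVariation e u) (c : ℝ) :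
    HasFiniteVariation e fun p => c * u p := by
  obtain ⟨C, hC⟩ := hu
  refine ⟨|c| * C, fun φ hφ hφ₁ => ?_⟩
  simp only [mul_assoc, integral_const_mul, abs_mul]
  exact mul_le_mul_of_nonneg_left (hC φ hφ hφ₁) (abs_nonneg c)

lemma hasFiniteVariation_of_weakDeriv {g : ℝ × ℝ → ℝ} {e : ℝ × ℝ} (hg : Integrable g)
    (h : ∀ φ, IsTest φ → ∫ p, g p * φ p = -∫ p, u p * dirDeriv e φ p) :
    HasFiniteVariation e u := by
  refine ⟨∫ p, |g p|, fun φ hφ hφ₁ => ?_⟩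
  rw [← abs_neg, ← h φ hφ]
  refine abs_integral_le_integral_abs.trans
    (integral_mono (hφ.integrable_mul hg).abs hg.abs fun p => ?_)
  rw [abs_mul]
  exact mul_le_of_le_one_right (abs_nonneg _) (hφ₁ p)

lemma IsTest.hasFiniteVariation (hu : IsTest u) (e : ℝ × ℝ) : HasFiniteVariation e u :=
  hasFiniteVariation_of_weakDeriv (hu.dirDeriv e).integrable fun φ hφ => by
    rw [hu.integral_mul_dirDeriv hφ, neg_neg]

lemma MemW11.hasFiniteVariation (hu : MemW11 u) : HasFiniteVariation (0, 1) u := by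
  obtain ⟨-, -, g, -, hg, -, h⟩ := hu
  exact hasFiniteVariation_of_weakDeriv hg h

end WeakSolutions

section UniformBoundedness

open scoped BoundedContinuousFunction

lemma exists_bound_of_forall_mem_bounded {E ι : Type*} [NormedAddCommGroup E] [NormedSpace ℝ E]
    [CompleteSpace E] {V : Submodule ℝ E} (hV : IsClosed (V : Set E)) (T : ι → E →L[ℝ] ℝ)
    (hT : ∀ x ∈ V, ∃ C, ∀ i, |T i x| ≤ C) : ∃ C, 0 ≤ C ∧ ∀ i, ∀ x ∈ V, |T i x| ≤ C * ‖x‖ := by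
  have : CompleteSpace V := hV.completeSpace_coe
  obtain ⟨C, hC⟩ := banach_steinhaus (g := fun i => (T i).comp V.subtypeL) fun x => hT x x.2
  refine ⟨|C|, abs_nonneg C, fun i x hx => ?_⟩
  exact ((T i).comp V.subtypeL).le_of_opNorm_le ((hC i).trans (le_abs_self C)) ⟨x, hx⟩

/-- Lebesgue measure on the open unit ball of `ℝ × ℝ`. -/
abbrev ballMeasure : Measure (ℝ × ℝ) := volume.restrict (Metric.ball 0 1)

instance : IsFiniteMeasure ballMeasure :=
  isFiniteMeasure_restrict.2 Metric.isBounded_ball.measure_lt_top.ne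

variable {φ ψ : ℝ × ℝ → ℝ}

/-- Integration against a test function over the unit ball, as a functional on `L¹`. -/
def ballPairing (hφ : IsTest φ) : Lp ℝ 1 ballMeasure →L[ℝ] ℝ :=
  ContinuousLinearMap.lpPairing ballMeasure ⊤ 1 (ContinuousLinearMap.mul ℝ ℝ)
    (hφ.continuous.memLp_top_of_hasCompactSupport hφ.2 ballMeasure).toLp

lemma ballPairing_apply (hφ : IsTest φ) (g : Lp ℝ 1 ballMeasure) :
    ballPairing hφ g = ∫ p in Metric.ball 0 1, φ p * g p := by
  rw [ballPairing, ContinuousLinearMap.lpPairing_eq_integral]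
  refine integral_congr_ae ?_
  filter_upwards [MemLp.coeFn_toLp
    (hφ.continuous.memLp_top_of_hasCompactSupport hφ.2 ballMeasure)] with p hp
  rw [ContinuousLinearMap.mul_apply', hp]

lemma ballPairing_congr (hφ : IsTest φ) {g : Lp ℝ 1 ballMeasure} {f : ℝ × ℝ → ℝ}
    (h : g =ᵐ[ballMeasure] f) : ballPairing hφ g = ∫ p in Metric.ball 0 1, φ p * f p := by
  rw [ballPairing_apply]
  exact integral_congr_ae (h.mono fun p hp => by simp only [hp])

/-- Integration of a bounded continuous function against a test function over the unit ball. -/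
def ballPairingC (hφ : IsTest φ) : (ℝ × ℝ →ᵇ ℝ) →L[ℝ] ℝ :=
  (ballPairing hφ).comp (BoundedContinuousFunction.toLp 1 ballMeasure ℝ)

lemma ballPairingC_apply (hφ : IsTest φ) (u : ℝ × ℝ →ᵇ ℝ) :
    ballPairingC hφ u = ∫ p in Metric.ball 0 1, φ p * u p :=
  ballPairing_congr hφ (BoundedContinuousFunction.coeFn_toLp 1 ballMeasure ℝ u)

/-- The left-hand sides of the conditions defining `solutionSpace`. -/
def solutionConstraints : (ℝ × ℝ →ᵇ ℝ) × Lp ℝ 1 ballMeasure →L[ℝ]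
    ({p : ℝ × ℝ // p ∉ Metric.ball 0 1} → ℝ) × ({φ : ℝ × ℝ → ℝ // IsTest φ} → ℝ) :=
  ((ContinuousLinearMap.pi fun p => BoundedContinuousFunction.evalCLM ℝ p.1).comp
    (.fst ℝ _ _)).prod
  (.pi fun φ => (ballPairingC φ.2.lap).coprod (ballPairing (φ.2.dirDeriv (1, 0))))

/-- The Banach space of pairs `(u, g)`, where `u` is continuous and vanishes outside the unit ball,
`g ∈ L¹` lives on the unit ball, and `Δu = ∂₁g` weakly. -/
def solutionSpace : Submodule ℝ ((ℝ × ℝ →ᵇ ℝ) × Lp ℝ 1 ballMeasure) :=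
  LinearMap.ker solutionConstraints.toLinearMap

lemma isClosed_solutionSpace :
    IsClosed (solutionSpace : Set ((ℝ × ℝ →ᵇ ℝ) × Lp ℝ 1 ballMeasure)) :=
  solutionConstraints.isClosed_ker

lemma mem_solutionSpace {x : (ℝ × ℝ →ᵇ ℝ) × Lp ℝ 1 ballMeasure} :
    x ∈ solutionSpace ↔ (∀ p ∉ Metric.ball 0 1, x.1 p = 0) ∧
      ∀ φ (hφ : IsTest φ),
        ballPairingC hφ.lap x.1 + ballPairing (hφ.dirDeriv (1, 0)) x.2 = 0 := by
  simp [solutionSpace, solutionConstraints, funext_iff]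

/-- The extension by zero to `ℝ²` of an integrable function on the unit ball. -/
def extendByZero (g : Lp ℝ 1 ballMeasure) : ℝ × ℝ → ℝ := (Metric.ball 0 1).indicator g

lemma measurable_extendByZero (g : Lp ℝ 1 ballMeasure) : Measurable (extendByZero g) :=
  (Lp.stronglyMeasurable g).measurable.indicator measurableSet_ball

lemma integrable_extendByZero (g : Lp ℝ 1 ballMeasure) : Integrable (extendByZero g) :=
  (integrable_indicator_iff measurableSet_ball).2 (L1.integrable_coeFn g)

lemma setIntegral_ball_mul_eq_integral {f u : ℝ × ℝ → ℝ} (hu : ∀ p ∉ Metric.ball 0 1, u p = 0) :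
    ∫ p in Metric.ball 0 1, f p * u p = ∫ p, f p * u p :=
  setIntegral_eq_integral_of_forall_compl_eq_zero fun p hp => by rw [hu p hp, mul_zero]

lemma ballPairing_eq_integral_extendByZero (hφ : IsTest φ) (g : Lp ℝ 1 ballMeasure) :
    ballPairing hφ g = ∫ p, φ p * extendByZero g p := by
  have hzero : ∀ p ∉ Metric.ball 0 1, extendByZero g p = 0 :=
    fun p hp => Set.indicator_of_notMem hp _
  rw [ballPairing_apply, ← setIntegral_ball_mul_eq_integral hzero]
  exact setIntegral_congr_fun measurableSet_ball fun p hp => by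
    simp only [extendByZero, Set.indicator_of_mem hp]

lemma hasCompactSupport_of_mem_solutionSpace {x : (ℝ × ℝ →ᵇ ℝ) × Lp ℝ 1 ballMeasure}
    (hx : x ∈ solutionSpace) : HasCompactSupport x.1 :=
  .of_support_subset_isCompact (isCompact_closedBall 0 1) fun p hp =>
    Metric.ball_subset_closedBall (by_contra fun h => hp ((mem_solutionSpace.1 hx).1 p h))

lemma integrable_of_mem_solutionSpace {x : (ℝ × ℝ →ᵇ ℝ) × Lp ℝ 1 ballMeasure}
    (hx : x ∈ solutionSpace) : Integrable x.1 :=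
  x.1.continuous.integrable_of_hasCompactSupport (hasCompactSupport_of_mem_solutionSpace hx)

lemma laplacianEqDiv_of_mem_solutionSpace {x : (ℝ × ℝ →ᵇ ℝ) × Lp ℝ 1 ballMeasure}
    (hx : x ∈ solutionSpace) : LaplacianEqDiv x.1 fun p => (extendByZero x.2 p, 0) := by
  intro φ hφ
  have h := (mem_solutionSpace.1 hx).2 φ hφ
  rw [ballPairingC_apply, setIntegral_ball_mul_eq_integral (mem_solutionSpace.1 hx).1,
    ballPairing_eq_integral_extendByZero] at h
  have hsecond : Integrable fun p => ∂₁ φ p * extendByZero x.2 p := by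
    simpa only [mul_comm] using (hφ.dirDeriv (1, 0)).integrable_mul (integrable_extendByZero x.2)
  rw [← integral_add (hφ.integrable_lap_mul (integrable_of_mem_solutionSpace hx)) hsecond] at h
  simpa only [fderiv_apply_eq_add, zero_mul, add_zero, mul_comm (extendByZero _ _)] using h

lemma exists_mem_solutionSpace (hψ : IsUnitTest ψ) {s : ℝ} (hs : ∀ p, |∂₁ ψ p| ≤ s) :
    ∃ x ∈ solutionSpace, (∀ p, x.1 p = ∂₁ ψ p) ∧ ‖x‖ ≤ s + ∫ p, |lap ψ p| := by
  have hlap : Integrable (lap ψ) ballMeasure := hψ.lap.isTest.integrable.restrict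
  let u : ℝ × ℝ →ᵇ ℝ := .ofNormedAddCommGroup (∂₁ ψ) (hψ.dirDeriv _).isTest.continuous s hs
  refine ⟨(u, hlap.toL1), mem_solutionSpace.2 ⟨fun p hp => (hψ.dirDeriv _).eq_zero hp,
    fun φ hφ => ?_⟩, fun p => rfl, ?_⟩
  · have h := laplacianEqDiv_dirDeriv hψ.isTest φ hφ
    have hJ : Integrable fun p => (lap ψ p, (0 : ℝ)) :=
      hψ.lap.isTest.integrable.prodMk (integrable_zero _ _ _)
    rw [integral_add (hφ.integrable_lap_mul (hψ.dirDeriv _).isTest.integrable)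
      (hφ.integrable_fderiv_apply hJ)] at h
    rw [ballPairingC_apply, ballPairing_congr _ hlap.coeFn_toL1]
    change (∫ p in Metric.ball 0 1, lap φ p * ∂₁ ψ p) + _ = 0
    rw [setIntegral_ball_mul_eq_integral fun p hp => (hψ.dirDeriv (1, 0)).eq_zero hp,
      setIntegral_ball_mul_eq_integral fun p hp => hψ.lap.eq_zero hp]
    simpa only [fderiv_apply_eq_add, zero_mul, add_zero, mul_comm (lap ψ _)] using h
  · have hs₀ : 0 ≤ s := (abs_nonneg _).trans (hs 0)
    have hu : ‖u‖ ≤ s := (BoundedContinuousFunction.norm_le hs₀).2 hs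
    have hg : ‖hlap.toL1‖ ≤ ∫ p, |lap ψ p| := by
      rw [L1.norm_of_fun_eq_integral_norm]
      exact setIntegral_le_integral hψ.lap.isTest.integrable.abs (.of_forall fun _ => abs_nonneg _)
    exact max_le (by linarith [norm_nonneg hlap.toL1]) (by linarith)

lemma exists_mem_solutionSpace_not_hasFiniteVariation :
    ∃ x ∈ solutionSpace, ¬ HasFiniteVariation (0, 1) x.1 := by
  by_contra! hall
  let T (φ : {φ : ℝ × ℝ → ℝ // IsTest φ ∧ ∀ p, |φ p| ≤ 1}) :
      (ℝ × ℝ →ᵇ ℝ) × Lp ℝ 1 ballMeasure →L[ℝ] ℝ :=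
    (ballPairingC (φ.2.1.dirDeriv (0, 1))).comp (.fst ℝ _ _)
  have T_apply (φ : {φ : ℝ × ℝ → ℝ // IsTest φ ∧ ∀ p, |φ p| ≤ 1}) {x} (hx : x ∈ solutionSpace) :
      T φ x = ∫ p, x.1 p * ∂₂ φ p := by
    change ballPairingC (φ.2.1.dirDeriv (0, 1)) x.1 = _
    rw [ballPairingC_apply, setIntegral_ball_mul_eq_integral (mem_solutionSpace.1 hx).1]
    simp only [mul_comm]
  obtain ⟨C, hC₀, hC⟩ := exists_bound_of_forall_mem_bounded isClosed_solutionSpace T fun x hx => by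
    obtain ⟨C, hC⟩ := hall x hx
    exact ⟨C, fun φ => by rw [T_apply φ hx]; exact hC φ φ.2.1 φ.2.2⟩
  refine not_mixedBound (ε := 1) hC₀ fun ψ φ s hψ hφ hφ₁ hs => ?_
  obtain ⟨x, hx, hxψ, hnorm⟩ := exists_mem_solutionSpace hψ hs
  calc
    ∫ p, ∂₁ ψ p * ∂₂ φ p = T ⟨φ, hφ.isTest, hφ₁⟩ x := by simp only [T_apply _ hx, hxψ]
    _ ≤ C * ‖x‖ := (le_abs_self _).trans (hC _ x hx)
    _ ≤ C * (1 * s + ∫ p, |lap ψ p|) := by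
      rw [one_mul]
      exact mul_le_mul_of_nonneg_left hnorm hC₀

end UniformBoundedness

section Construction

variable {u ϱ : ℝ × ℝ → ℝ} {J : ℝ × ℝ → ℝ × ℝ}

lemma emag_smul (c : ℝ) (v : ℝ × ℝ) : emag (c • v) = |c| * emag v := by
  rw [emag, emag, ← sqrt_sq_eq_abs, ← sqrt_mul (sq_nonneg c)]
  congr 1
  simp only [Prod.smul_fst, Prod.smul_snd, smul_eq_mul]
  ring

lemma continuous_emag : Continuous emag := by
  unfold emag
  fun_prop

lemma emag_le_abs_add_abs (v : ℝ × ℝ) : emag v ≤ |v.1| + |v.2| := by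
  refine sqrt_le_iff.2 ⟨by positivity, ?_⟩
  rw [← sq_abs v.1, ← sq_abs v.2]
  nlinarith [mul_nonneg (abs_nonneg v.1) (abs_nonneg v.2)]

lemma integrable_emag (hJ : Integrable J) : Integrable fun p => emag (J p) := by
  refine (hJ.fst.abs.add hJ.snd.abs).mono'
    (continuous_emag.comp_aestronglyMeasurable hJ.aestronglyMeasurable) (.of_forall fun p => ?_)
  rw [norm_of_nonneg (show 0 ≤ emag (J p) from sqrt_nonneg _)]
  exact emag_le_abs_add_abs (J p)

lemma MemW11loc.memW11 (h : MemW11loc u) (hu : HasCompactSupport u) : MemW11 u := by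
  obtain ⟨r, hr, hur⟩ := hu.isCompact.isBounded.subset_closedBall_lt 0 0
  obtain ⟨ζ, hζ, -, hζ₁⟩ := exists_isTest_eq_const_on_closedBall 1 zero_le_one r hr
  have hζu : (fun p => ζ p * u p) = u := by
    funext p
    by_cases hp : p ∈ tsupport u
    · rw [hζ₁ p (hur hp), one_mul]
    · rw [image_eq_zero_of_notMem_tsupport hp, mul_zero]
  exact hζu ▸ h ζ hζ

/-- The velocity `b` for which the density `ϱ` has flux `ϱ b = J`. It is zero, by the convention
`0⁻¹ = 0`, where `ϱ` vanishes. -/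
def drift (ϱ : ℝ × ℝ → ℝ) (J : ℝ × ℝ → ℝ × ℝ) (p : ℝ × ℝ) : ℝ × ℝ := (ϱ p)⁻¹ • J p

lemma smul_drift (hJ : ∀ p, ϱ p = 0 → J p = 0) (p : ℝ × ℝ) : ϱ p • drift ϱ J p = J p := by
  by_cases hp : ϱ p = 0
  · rw [hp, zero_smul, hJ p hp]
  · rw [drift, smul_inv_smul₀ hp]

lemma emag_drift_mul (hϱ : ∀ p, 0 ≤ ϱ p) (hJ : ∀ p, ϱ p = 0 → J p = 0) (p : ℝ × ℝ) :
    emag (drift ϱ J p) * ϱ p = emag (J p) := by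
  rw [← smul_drift hJ p, emag_smul, abs_of_nonneg (hϱ p), mul_comm]

lemma hasCompactSupport_drift (hϱ : HasCompactSupport ϱ) : HasCompactSupport (drift ϱ J) :=
  (hϱ.comp_left (g := (·⁻¹)) inv_zero).smul_right

lemma LaplacianEqDiv.integral_drift (h : LaplacianEqDiv ϱ J) (hJ : ∀ p, ϱ p = 0 → J p = 0)
    {φ : ℝ × ℝ → ℝ} (hφ : IsTest φ) :
    ∫ p, (lap φ p + fderiv ℝ φ p (drift ϱ J p)) * ϱ p = 0 := by
  rw [← h φ hφ]
  congr 1 with p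
  rw [add_mul, ← smul_drift hJ p, map_smul, smul_eq_mul, mul_comm (ϱ p)]

lemma integral_pos_of_not_hasFiniteVariation (hc : Continuous ϱ) (hsupp : HasCompactSupport ϱ)
    (hϱ : ∀ p, 0 ≤ ϱ p) {e : ℝ × ℝ} (hvar : ¬ HasFiniteVariation e ϱ) : 0 < ∫ p, ϱ p := by
  obtain ⟨p, hp⟩ : ∃ p, ϱ p ≠ 0 := by
    by_contra! h
    refine hvar (IsTest.hasFiniteVariation ?_ e)
    rw [funext h]
    exact ⟨contDiff_const, .zero⟩
  exact hc.integral_pos_of_hasCompactSupport_nonneg_nonzero hsupp hϱ hp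

/-- Adding a smooth hump `η` to a solution makes it nonnegative and adds `∇η` to the flux; at the
zeros of `η`, which are minima, `∇η` vanishes as well. -/
lemma exists_nonneg_laplacianEqDiv_not_hasFiniteVariation :
    ∃ (ϱ : ℝ × ℝ → ℝ) (J : ℝ × ℝ → ℝ × ℝ), Continuous ϱ ∧ HasCompactSupport ϱ ∧ (∀ p, 0 ≤ ϱ p) ∧
      Measurable J ∧ Integrable J ∧ (∀ p, ϱ p = 0 → J p = 0) ∧ LaplacianEqDiv ϱ J ∧
      ¬ HasFiniteVariation (0, 1) ϱ := by
  obtain ⟨x, hx, hvar⟩ := exists_mem_solutionSpace_not_hasFiniteVariation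
  have hu₀ := (mem_solutionSpace.1 hx).1
  have hui := integrable_of_mem_solutionSpace hx
  have hG : Integrable fun p => (extendByZero x.2 p, (0 : ℝ)) :=
    (integrable_extendByZero x.2).prodMk (integrable_zero _ _ _)
  obtain ⟨η, hη, hη₀, hηball⟩ := exists_isTest_eq_const_on_closedBall (‖x.1‖ + 1) (by positivity)
    1 one_pos
  have hη' : Integrable fun p => (∂₁ η p, ∂₂ η p) :=
    (hη.dirDeriv _).integrable.prodMk (hη.dirDeriv _).integrable
  have hpos {p : ℝ × ℝ} (hp : p ∈ Metric.ball 0 1) : 0 < η p + x.1 p := by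
    rw [hηball p (Metric.ball_subset_closedBall hp)]
    linarith [neg_abs_le (x.1 p), x.1.norm_coe_le_norm p, norm_eq_abs (x.1 p)]
  refine ⟨fun p => η p + x.1 p, fun p => (∂₁ η p, ∂₂ η p) + (extendByZero x.2 p, 0),
    hη.continuous.add x.1.continuous, hη.2.add (hasCompactSupport_of_mem_solutionSpace hx),
    fun p => ?_, ?_, hη'.add hG, fun p hp => ?_,
    (laplacianEqDiv_gradient hη).add (laplacianEqDiv_of_mem_solutionSpace hx) hη.integrable hη' hui
      hG, fun h => hvar ?_⟩
  · by_cases hp : p ∈ Metric.ball 0 1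
    · exact (hpos hp).le
    · simpa only [hu₀ p hp, add_zero] using hη₀ p
  · exact ((hη.dirDeriv _).continuous.measurable.prodMk (hη.dirDeriv _).continuous.measurable).add
      ((measurable_extendByZero x.2).prodMk measurable_const)
  · have hball : p ∉ Metric.ball 0 1 := fun h => (hpos h).ne' hp
    have hmin : IsLocalMin η p := .of_forall fun q => by
      rw [show η p = 0 by simpa only [hu₀ p hball, add_zero] using hp]
      exact hη₀ q
    simp only [dirDeriv, hmin.fderiv_eq_zero, zero_apply, extendByZero,
      Set.indicator_of_notMem hball, Prod.mk_zero_zero, add_zero]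
  · have hdiff := h.add ((hη.hasFiniteVariation (0, 1)).const_mul (-1)) (hη.integrable.add hui)
      (hη.integrable.const_mul (-1))
    simpa only [neg_one_mul, add_neg_cancel_comm] using hdiff

end Construction

/-- There exist a continuous compactly supported probability density `ϱ` on `ℝ²` and a Borel
vector field `b` with compact support such that `|b|ϱ ∈ L¹(ℝ²)`, the equation
`Δϱ − div(ϱ b) = 0` holds in the weak sense (`∫ [Δφ + ⟨b,∇φ⟩] ϱ dx = 0` for all test `φ`),
but `ϱ ∉ W^{1,1}_loc(ℝ²)`. -/
theorem continuous_density_FPK_not_W11loc :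
    ∃ (ϱ : ℝ × ℝ → ℝ) (b : ℝ × ℝ → ℝ × ℝ),
      Continuous ϱ ∧ HasCompactSupport ϱ ∧ (∀ p, 0 ≤ ϱ p) ∧ (∫ p, ϱ p = 1) ∧
      Measurable b ∧ HasCompactSupport b ∧
      Integrable (fun p => emag (b p) * ϱ p) ∧
      (∀ φ : ℝ × ℝ → ℝ, IsTest φ →
        ∫ p, (pd1 (pd1 φ) p + pd2 (pd2 φ) p + fderiv ℝ φ p (b p)) * ϱ p = 0) ∧
      ¬ MemW11loc ϱ := by
  obtain ⟨w, J, hw, hsupp, hnonneg, hJm, hJi, hJ, heq, hvar⟩ :=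
    exists_nonneg_laplacianEqDiv_not_hasFiniteVariation
  have hpos : 0 < ∫ p, w p := integral_pos_of_not_hasFiniteVariation hw hsupp hnonneg hvar
  set c : ℝ := (∫ p, w p)⁻¹
  have hsupp' : HasCompactSupport fun p => c * w p := hsupp.mul_left
  refine ⟨fun p => c * w p, drift w J, continuous_const.mul hw, hsupp',
    fun p => mul_nonneg (inv_nonneg.2 hpos.le) (hnonneg p), ?_,
    hw.measurable.inv.smul hJm, hasCompactSupport_drift hsupp, ?_, fun φ hφ => ?_, fun h => ?_⟩
  · rw [integral_const_mul, inv_mul_cancel₀ hpos.ne']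
  · simp only [mul_left_comm _ c, emag_drift_mul hnonneg hJ]
    exact (integrable_emag hJi).const_mul c
  · simp only [mul_left_comm _ c, integral_const_mul]
    exact mul_eq_zero_of_right c (heq.integral_drift hJ hφ)
  · have hrescale := (h.memW11 hsupp').hasFiniteVariation.const_mul (∫ p, w p)
    simp only [c, mul_inv_cancel_left₀ hpos.ne'] at hrescale
    exact hvar hrescale
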